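/- arXiv:1502.04318 — 3 statements merged into one kernel-verified Lean document; each statement's English description precedes it below -/
import Mathlib

section
/- Under the uniform two-step contraction condition, for every bounded measurable F : E → ℝ and every x₀ ∈ E: ℙ_{x₀}-almost surely only finitely many of the terms F(X_n) are nonzero, the random series S = Σ_{n=0}^∞ F(X_n) converges absolutely almost surely and is integrable, and 𝔼_{x₀}[S] = Σ_{n=0}^∞ (K^n F)(x₀); that is, the score-sum estimator S is an unbiased estimator of the Neumann-series solution of u = K u + F. -/
open MeasureTheory ProbabilityTheory

/-- The measurable-space structure on `E ∪ {∂}`, realized as `Option E` with `∂ = none`. -/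
instance {α : Type*} [MeasurableSpace α] : MeasurableSpace (Option α) :=
  MeasurableSpace.comap (fun o => ((Equiv.optionEquivSumPUnit α) o : α ⊕ PUnit.{1})) inferInstance

/-- The integral operator `(K F)(x) = ∫ F(y) κ(x, dy)` associated to a kernel `κ`. -/
noncomputable def Kop {E : Type*} [MeasurableSpace E] (κ : Kernel E E) (F : E → ℝ) : E → ℝ :=
  fun x => ∫ y, F y ∂(κ x)

/-- The `n`-th iterate `K^n` of the integral operator. -/
noncomputable def Kiter {E : Type*} [MeasurableSpace E] (κ : Kernel E E) : ℕ → (E → ℝ) → E → ℝ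
  | 0 => id
  | n + 1 => fun F => Kop κ (Kiter κ n F)

/-!
Killing is forgotten by restricting laws to `E`: the law of `X_n` restricted to `E` is
`κⁿ(x₀, ·)`. Summed over `n`, everything about the score sum is therefore governed by the Green
measure `G = ∑ₙ κⁿ(x₀, ·)`. Contraction after `m` steps makes the masses of `κⁿ(x₀, ·)` decay
geometrically along each residue class of `n` modulo `m`, so `G` is finite. Then `∑ₙ ℙ(F(X_n) ≠ 0)`
is the `G`-mass of the support of `F`, and Borel–Cantelli leaves finitely many nonzero terms;
`∑ₙ 𝔼|F(X_n)| = ∫ |F| dG` is finite, and Fubini gives integrability and the expectation.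
-/

open scoped ENNReal

section OptionMeasure

variable {α β : Type*} [MeasurableSpace α] [MeasurableSpace β]

lemma measurableEmbedding_some : MeasurableEmbedding (some : α → Option α) where
  injective := Option.some_injective α
  measurable := measurable_comap_iff.mpr measurable_inl
  measurableSet_image' s hs :=
    ⟨Sum.inl '' s, hs.inl_image, by ext (_ | a) <;> simp⟩

lemma measurable_option_elim {f : α → β} (hf : Measurable f) (b : β) :
    Measurable fun o : Option α => o.elim b f := by
  have h : (fun o : Option α => o.elim b f)
      = Sum.elim f (fun _ => b) ∘ Equiv.optionEquivSumPUnit.{0} α := by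
    ext (_ | a) <;> rfl
  rw [h]
  exact (hf.sumElim measurable_const).comp (comap_measurable _)

lemma lintegral_option_elim_zero (ν : Measure (Option α)) (f : α → ℝ≥0∞) :
    ∫⁻ o, o.elim 0 f ∂ν = ∫⁻ x, f x ∂(ν.comap some) := by
  have h : Function.support (fun o : Option α => o.elim 0 f) ⊆ Set.range some := by
    rintro (_ | a) ha
    · exact absurd rfl ha
    · exact Set.mem_range_self a
  rw [← setLIntegral_eq_of_support_subset h, ← measurableEmbedding_some.map_comap,
    measurableEmbedding_some.lintegral_map]
  rfl

lemma integral_option_elim_zero {G : Type*} [NormedAddCommGroup G] [NormedSpace ℝ G]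
    (ν : Measure (Option α)) (f : α → G) :
    ∫ o, o.elim 0 f ∂ν = ∫ x, f x ∂(ν.comap some) := by
  have h : ∀ o ∉ Set.range some, o.elim 0 f = 0 := by
    rintro (_ | a) ha
    · rfl
    · exact absurd (Set.mem_range_self a) ha
  rw [← setIntegral_eq_integral_of_forall_compl_eq_zero h, ← measurableEmbedding_some.map_comap,
    measurableEmbedding_some.integral_map]
  rfl

lemma comap_some_comp {κ : Kernel α α} {η : Kernel (Option α) (Option α)}
    (hη : ∀ o, (η o).comap some = o.elim 0 κ) (ν : Measure (Option α)) :
    (η ∘ₘ ν).comap some = κ ∘ₘ ν.comap some := by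
  ext A hA
  have hη_image (o : Option α) : η o (some '' A) = o.elim 0 (κ · A) := by
    rw [← measurableEmbedding_some.comap_apply, hη]
    cases o <;> rfl
  rw [measurableEmbedding_some.comap_apply,
    Measure.bind_apply (measurableEmbedding_some.measurableSet_image' hA) η.aemeasurable,
    Measure.bind_apply hA κ.aemeasurable, ← lintegral_option_elim_zero]
  simp_rw [hη_image]

lemma comap_some_eq_elim {κ : Kernel α α} {η : Kernel (Option α) (Option α)}
    (hsome : ∀ a : α, ∀ A : Set (Option α), MeasurableSet A →
      η (some a) A = κ a (some ⁻¹' A) + (1 - κ a Set.univ) * A.indicator 1 none)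
    (hnone : η none = Measure.dirac none) (o : Option α) :
    (η o).comap some = o.elim 0 κ := by
  ext A hA
  have hA' := measurableEmbedding_some.measurableSet_image' hA
  rw [measurableEmbedding_some.comap_apply]
  cases o with
  | none => simp [hnone, Measure.dirac_apply' _ hA']
  | some a => simp [hsome a _ hA', Set.preimage_image_eq _ (Option.some_injective α)]

end OptionMeasure

section KernelPowers

variable {α : Type*} [MeasurableSpace α]

lemma kernel_pow_zero_apply (κ : Kernel α α) (x : α) : (κ ^ 0) x = Measure.dirac x :=
  Kernel.id_apply x

lemma kernel_pow_succ (κ : Kernel α α) (n : ℕ) : κ ^ (n + 1) = κ ∘ₖ (κ ^ n) :=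
  pow_succ' κ n

lemma isFiniteKernel_kernel_pow (κ : Kernel α α) [IsFiniteKernel κ] (n : ℕ) :
    IsFiniteKernel (κ ^ n) := by
  induction n with
  | zero => exact inferInstanceAs (IsFiniteKernel Kernel.id)
  | succ n ih =>
    rw [kernel_pow_succ]
    infer_instance

lemma kernel_pow_apply_univ_le {κ : Kernel α α} {c : ℝ≥0∞} (hκ : ∀ x, κ x Set.univ ≤ c)
    (n : ℕ) (x : α) : (κ ^ n) x Set.univ ≤ c ^ n := by
  induction n with
  | zero => rw [kernel_pow_zero_apply, measure_univ, pow_zero]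
  | succ n ih =>
    calc (κ ^ (n + 1)) x Set.univ
        = ∫⁻ y, κ y Set.univ ∂(κ ^ n) x := Kernel.pow_succ_apply_eq_lintegral κ n x .univ
      _ ≤ ∫⁻ _, c ∂(κ ^ n) x := lintegral_mono hκ
      _ = c * (κ ^ n) x Set.univ := lintegral_const c
      _ ≤ c ^ (n + 1) := by rw [pow_succ']; gcongr

/-- The Green (potential) kernel `∑ₙ κⁿ`: `greenKernel κ x A` is the expected number of visits
to `A` of the chain started at `x` that moves according to `κ` until it is killed. -/
noncomputable def greenKernel (κ : Kernel α α) : Kernel α α :=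
  Kernel.sum fun n => κ ^ n

lemma isFiniteMeasure_greenKernel (κ : Kernel α α) [IsFiniteKernel κ] (m : ℕ) [NeZero m]
    {c : ℝ≥0∞} (hc : c < 1) (hκ : ∀ x, (κ ^ m) x Set.univ ≤ c) (x : α) :
    IsFiniteMeasure (greenKernel κ x) := by
  have hdecay (q : ℕ) (r : Fin m) :
      (κ ^ (r + q * m : ℕ)) x Set.univ ≤ c ^ q * (κ ^ (r : ℕ)).bound := by
    rw [pow_add, mul_comm q, pow_mul]
    exact (Kernel.comp_apply_univ_le ((κ ^ m) ^ q) (κ ^ (r : ℕ)) x).trans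
      (by gcongr; exact kernel_pow_apply_univ_le hκ q x)
  constructor
  calc greenKernel κ x Set.univ
      = ∑' n, (κ ^ n) x Set.univ := Kernel.sum_apply' _ x .univ
    _ = ∑' (q : ℕ) (r : Fin m), (κ ^ (r + q * m : ℕ)) x Set.univ := by
      rw [← (Nat.divModEquiv m).symm.tsum_eq, ENNReal.tsum_prod']
      simp only [Nat.divModEquiv_symm_apply, add_comm]
    _ ≤ ∑' (q : ℕ) (r : Fin m), c ^ q * (κ ^ (r : ℕ)).bound :=
      ENNReal.tsum_le_tsum fun q => ENNReal.tsum_le_tsum (hdecay q)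
    _ = (1 - c)⁻¹ * ∑ r : Fin m, (κ ^ (r : ℕ)).bound := by
      simp_rw [ENNReal.tsum_mul_left, ENNReal.tsum_mul_right, ENNReal.tsum_geometric, tsum_fintype]
    _ < ∞ := by
      have hbound (r : Fin m) : (κ ^ (r : ℕ)).bound < ∞ :=
        have := isFiniteKernel_kernel_pow κ r
        Kernel.bound_lt_top _
      exact ENNReal.mul_lt_top (ENNReal.inv_lt_top.mpr (tsub_pos_of_lt hc))
        (ENNReal.sum_lt_top.mpr fun r _ => hbound r)

lemma isFiniteMeasure_greenKernel_of_lintegral_le (κ : Kernel α α) [IsFiniteKernel κ]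
    {c : ℝ≥0∞} (hc : c < 1) (hκ : ∀ x, ∫⁻ y, κ y Set.univ ∂(κ x) ≤ c) (x : α) :
    IsFiniteMeasure (greenKernel κ x) := by
  refine isFiniteMeasure_greenKernel κ 2 hc (fun y => ?_) x
  rw [kernel_pow_succ, pow_one, Kernel.comp_apply' _ _ _ .univ]
  exact hκ y

lemma Kiter_succ_eq_Kiter_Kop (κ : Kernel α α) (n : ℕ) (F : α → ℝ) :
    Kiter κ (n + 1) F = Kiter κ n (Kop κ F) := by
  induction n with
  | zero => rfl
  | succ n ih => exact congrArg (Kop κ) ih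

lemma Kiter_eq_integral_pow (κ : Kernel α α) {F : α → ℝ} (hF : Measurable F) {n : ℕ}
    {x : α} (hint : Integrable F ((κ ^ n) x)) :
    Kiter κ n F x = ∫ y, F y ∂(κ ^ n) x := by
  induction n generalizing F with
  | zero =>
    rw [kernel_pow_zero_apply, integral_dirac' F x hF.stronglyMeasurable]
    rfl
  | succ n ih =>
    rw [kernel_pow_succ] at hint ⊢
    have hKop : Measurable (Kop κ F) := hF.stronglyMeasurable.integral_kernel.measurable
    calc Kiter κ (n + 1) F x
        = Kiter κ n (Kop κ F) x := by rw [Kiter_succ_eq_Kiter_Kop]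
      _ = ∫ y, Kop κ F y ∂(κ ^ n) x := ih hKop hint.integral_comp
      _ = ∫ y, F y ∂(κ ∘ₖ (κ ^ n)) x := (Kernel.integral_comp hint).symm

end KernelPowers

lemma integrable_tsum_of_tsum_lintegral_enorm_ne_top {Ω : Type*} [MeasurableSpace Ω]
    {P : Measure Ω} {Y : ℕ → Ω → ℝ} (hY : ∀ n, Measurable (Y n))
    (hsum : ∑' n, ∫⁻ ω, ‖Y n ω‖ₑ ∂P ≠ ∞) :
    Integrable (fun ω => ∑' n, Y n ω) P := by
  refine ⟨(Measurable.tsum hY).aestronglyMeasurable, ?_⟩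
  calc ∫⁻ ω, ‖∑' n, Y n ω‖ₑ ∂P
      ≤ ∫⁻ ω, ∑' n, ‖Y n ω‖ₑ ∂P := lintegral_mono fun _ => enorm_tsum_le_tsum_enorm
    _ = ∑' n, ∫⁻ ω, ‖Y n ω‖ₑ ∂P := lintegral_tsum fun n => (hY n).enorm.aemeasurable
    _ < ∞ := hsum.lt_top

section MarkovChain

variable {α Ω : Type*} [MeasurableSpace α] [MeasurableSpace Ω] {P : Measure Ω}

lemma map_eq_comp_map_of_integral_eq [IsFiniteMeasure P] {η : Kernel α α} [IsFiniteKernel η]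
    {Y Z : Ω → α} (hY : Measurable Y) (hZ : Measurable Z)
    (h : ∀ g : α → ℝ, Measurable g → (∃ C, ∀ y, |g y| ≤ C) →
      ∫ ω, g (Z ω) ∂P = ∫ ω, ∫ y, g y ∂(η (Y ω)) ∂P) :
    P.map Z = η ∘ₘ P.map Y := by
  ext A hA
  have hmeas : Measurable (A.indicator (1 : α → ℝ)) := measurable_one.indicator hA
  have hbound (y : α) : |A.indicator (1 : α → ℝ) y| ≤ 1 := by by_cases hy : y ∈ A <;> simp [hy]
  have hint : Integrable (A.indicator (1 : α → ℝ)) (η ∘ₘ P.map Y) :=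
    Integrable.of_bound hmeas.aestronglyMeasurable 1 (.of_forall hbound)
  rw [← measureReal_eq_measureReal_iff]
  calc (P.map Z).real A
      = ∫ ω, A.indicator 1 (Z ω) ∂P := by
        rw [← integral_indicator_one hA, integral_map hZ.aemeasurable hmeas.aestronglyMeasurable]
    _ = ∫ ω, ∫ y, A.indicator 1 y ∂(η (Y ω)) ∂P := h _ hmeas ⟨1, hbound⟩
    _ = ∫ x, ∫ y, A.indicator 1 y ∂(η x) ∂(P.map Y) :=
        (integral_map hY.aemeasurable
          hmeas.stronglyMeasurable.integral_kernel.aestronglyMeasurable).symm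
    _ = ∫ y, A.indicator 1 y ∂(η ∘ₘ P.map Y) := by
        rw [Measure.comp_eq_comp_const_apply] at hint ⊢
        rw [Kernel.integral_comp hint, Kernel.const_apply]
    _ = (η ∘ₘ P.map Y).real A := integral_indicator_one hA

variable {κ : Kernel α α} {x₀ : α} {X : ℕ → Ω → Option α}

lemma comap_some_map_eq_pow {κhat : Kernel (Option α) (Option α)}
    (hκhat : ∀ o, (κhat o).comap some = o.elim 0 κ)
    (hX₀ : P.map (X 0) = Measure.dirac (some x₀))
    (hMarkov : ∀ n, P.map (X (n + 1)) = κhat ∘ₘ P.map (X n)) (n : ℕ) :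
    (P.map (X n)).comap some = (κ ^ n) x₀ := by
  induction n with
  | zero =>
    rw [hX₀, kernel_pow_zero_apply, ← Measure.map_dirac' measurableEmbedding_some.measurable,
      measurableEmbedding_some.comap_map]
  | succ n ih => rw [hMarkov, comap_some_comp hκhat, ih, kernel_pow_succ, Kernel.comp_apply]

lemma tsum_lintegral_option_elim_zero
    (hX : ∀ n, Measurable (X n)) (hlaw : ∀ n, (P.map (X n)).comap some = (κ ^ n) x₀)
    {f : α → ℝ≥0∞} (hf : Measurable f) :
    ∑' n, ∫⁻ ω, (X n ω).elim 0 f ∂P = ∫⁻ x, f x ∂(greenKernel κ x₀) := by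
  rw [greenKernel, Kernel.sum_apply, lintegral_sum_measure]
  refine tsum_congr fun n => ?_
  rw [← hlaw, ← lintegral_option_elim_zero, lintegral_map (measurable_option_elim hf 0) (hX n)]

lemma ae_finite_option_elim_ne_zero
    (hX : ∀ n, Measurable (X n)) (hlaw : ∀ n, (P.map (X n)).comap some = (κ ^ n) x₀)
    {F : α → ℝ} (hF : Measurable F) (hsupp : greenKernel κ x₀ (Function.support F) ≠ ∞) :
    ∀ᵐ ω ∂P, {n : ℕ | (X n ω).elim 0 F ≠ 0}.Finite := by
  have hS : MeasurableSet (Function.support F) := measurableSet_support hF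
  have hvisit (n : ℕ) : P {ω | (X n ω).elim 0 F ≠ 0}
      = ∫⁻ ω, (X n ω).elim 0 ((Function.support F).indicator 1) ∂P := by
    have hmeas : MeasurableSet {ω | (X n ω).elim 0 F ≠ 0} :=
      measurableSet_support ((measurable_option_elim hF 0).comp (hX n))
    rw [← lintegral_indicator_one hmeas]
    congr with ω
    cases h : X n ω <;> simp [Set.indicator, h]
  have hsum : ∑' n, P {ω | (X n ω).elim 0 F ≠ 0} = greenKernel κ x₀ (Function.support F) := by
    simp_rw [hvisit]
    rw [tsum_lintegral_option_elim_zero hX hlaw (measurable_one.indicator hS),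
      lintegral_indicator_one hS]
  exact ae_finite_setOfPred_mem (hsum ▸ hsupp)

lemma tsum_lintegral_enorm_option_elim
    (hX : ∀ n, Measurable (X n)) (hlaw : ∀ n, (P.map (X n)).comap some = (κ ^ n) x₀)
    {F : α → ℝ} (hF : Measurable F) :
    ∑' n, ∫⁻ ω, ‖(X n ω).elim 0 F‖ₑ ∂P = ∫⁻ x, ‖F x‖ₑ ∂(greenKernel κ x₀) := by
  rw [← tsum_lintegral_option_elim_zero hX hlaw hF.enorm]
  congr with n
  congr with ω
  cases X n ω <;> simp

lemma integral_option_elim_eq_Kiter {Z : Ω → Option α} (hZ : Measurable Z) {n : ℕ}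
    (hlaw : (P.map Z).comap some = (κ ^ n) x₀)
    {F : α → ℝ} (hF : Measurable F) (hint : Integrable F ((κ ^ n) x₀)) :
    ∫ ω, (Z ω).elim 0 F ∂P = Kiter κ n F x₀ := by
  rw [Kiter_eq_integral_pow κ hF hint, ← hlaw, ← integral_option_elim_zero,
    integral_map hZ.aemeasurable (measurable_option_elim hF 0).aestronglyMeasurable]

end MarkovChain

theorem stmt1_general {E : Type*} [MeasurableSpace E] (κ : Kernel E E)
    (κhat : Kernel (Option E) (Option E)) (hκhat : ∀ o, (κhat o).comap some = o.elim 0 κ) (x₀ : E)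
    {Ω : Type*} [MeasurableSpace Ω] (P : Measure Ω) (X : ℕ → Ω → Option E)
    (hX : ∀ n, Measurable (X n))
    (hX₀ : P.map (X 0) = Measure.dirac (some x₀))
    (hMarkov : ∀ n, P.map (X (n + 1)) = κhat ∘ₘ P.map (X n))
    (F : E → ℝ) (hF : Measurable F) (hint : Integrable F (greenKernel κ x₀))
    (hsupp : greenKernel κ x₀ (Function.support F) ≠ ∞) :
    (∀ᵐ ω ∂P, {n : ℕ | (X n ω).elim 0 F ≠ 0}.Finite) ∧
    (∀ᵐ ω ∂P, Summable fun n => |(X n ω).elim 0 F|) ∧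
    Integrable (fun ω => ∑' n, (X n ω).elim 0 F) P ∧
    ∫ ω, (∑' n, (X n ω).elim 0 F) ∂P = ∑' n, Kiter κ n F x₀ := by
  have hlaw := comap_some_map_eq_pow hκhat hX₀ hMarkov
  have hY (n : ℕ) : Measurable fun ω => (X n ω).elim 0 F :=
    (measurable_option_elim hF 0).comp (hX n)
  have hfin := ae_finite_option_elim_ne_zero hX hlaw hF hsupp
  have hsum : ∑' n, ∫⁻ ω, ‖(X n ω).elim 0 F‖ₑ ∂P ≠ ∞ :=
    tsum_lintegral_enorm_option_elim hX hlaw hF ▸ hint.2.ne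
  refine ⟨hfin, ?_, integrable_tsum_of_tsum_lintegral_enorm_ne_top hY hsum, ?_⟩
  · filter_upwards [hfin] with ω hω
    exact (summable_of_hasFiniteSupport hω).abs
  · rw [integral_tsum (fun n => (hY n).aestronglyMeasurable) hsum]
    exact tsum_congr fun n => integral_option_elim_eq_Kiter (hX n) (hlaw n) hF
      (hint.mono_measure (Measure.le_sum _ n))

/-- Under the uniform two-step contraction condition, for every bounded measurable `F` and
every starting point `x₀ ∈ E`: `ℙ_{x₀}`-a.s. only finitely many of the terms `F(X_n)` are
nonzero, the score sum `S = Σ_n F(X_n)` converges absolutely a.s. and is integrable, and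
`𝔼_{x₀}[S] = Σ_n (K^n F)(x₀)`, i.e. `S` is an unbiased estimator of the Neumann-series
solution of `u = K u + F`.  Here the chain `(X_n)` on `E ∪ {∂} = Option E` (with `∂ = none`)
has transition kernel `κ̂` extending `κ`, starts at `x₀`, and `F` is extended by `F(∂) = 0`. -/
theorem stmt1 {E : Type*} [MeasurableSpace E] (κ : Kernel E E)
    (hsub : ∀ x, κ x Set.univ ≤ 1)
    (C₁ : ℝ) (hC₁ : C₁ < 1)
    (hcontract : ∀ x, ∫⁻ y, κ y Set.univ ∂(κ x) ≤ ENNReal.ofReal C₁)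
    (F : E → ℝ) (hFmeas : Measurable F) (hFbd : ∃ C, ∀ x, |F x| ≤ C)
    -- the extended Markov kernel `κ̂` on `E ∪ {∂}`, where `∂ = none`
    (κhat : Kernel (Option E) (Option E)) [IsMarkovKernel κhat]
    (hκhat : ∀ a : E, ∀ A : Set (Option E), MeasurableSet A →
      κhat (some a) A = κ a (some ⁻¹' A) + (1 - κ a Set.univ) * A.indicator 1 none)
    (hκhatCemetery : κhat none = Measure.dirac none)
    (x₀ : E)
    -- the Markov chain `(X_n)` with transition kernel `κ̂`, `X₀ = x₀`, and law `P = ℙ_{x₀}`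
    {Ω : Type*} [MeasurableSpace Ω] (P : Measure Ω) [IsProbabilityMeasure P]
    (X : ℕ → Ω → Option E) (hXmeas : ∀ n, Measurable (X n))
    (hX₀ : ∀ ω, X 0 ω = some x₀)
    (hMarkov : ∀ n : ℕ, ∀ f : (Fin (n + 1) → Option E) → ℝ, Measurable f →
      (∃ Cf, ∀ v, |f v| ≤ Cf) → ∀ g : Option E → ℝ, Measurable g → (∃ Cg, ∀ y, |g y| ≤ Cg) →
      ∫ ω, f (fun i => X i ω) * g (X (n + 1) ω) ∂P
        = ∫ ω, f (fun i => X i ω) * ∫ y, g y ∂(κhat (X n ω)) ∂P) :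
    (∀ᵐ ω ∂P, {n : ℕ | (X n ω).elim 0 F ≠ 0}.Finite) ∧
    (∀ᵐ ω ∂P, Summable fun n => |(X n ω).elim 0 F|) ∧
    Integrable (fun ω => ∑' n, (X n ω).elim 0 F) P ∧
    ∫ ω, (∑' n, (X n ω).elim 0 F) ∂P = ∑' n, Kiter κ n F x₀ := by
  have : IsFiniteKernel κ := ⟨1, ENNReal.one_lt_top, hsub⟩
  have := isFiniteMeasure_greenKernel_of_lintegral_le κ (ENNReal.ofReal_lt_one.mpr hC₁) hcontract x₀
  obtain ⟨C, hC⟩ := hFbd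
  have hlaw_succ (n : ℕ) : P.map (X (n + 1)) = κhat ∘ₘ P.map (X n) :=
    map_eq_comp_map_of_integral_eq (hXmeas n) (hXmeas (n + 1)) fun g hg hgb => by
      simpa using hMarkov n (fun _ => 1) measurable_const ⟨1, by simp⟩ g hg hgb
  exact stmt1_general κ κhat (comap_some_eq_elim hκhat hκhatCemetery) x₀ P X hXmeas
    (by simp [funext hX₀, Measure.map_const]) hlaw_succ F hFmeas
    (.of_bound hFmeas.aestronglyMeasurable C (.of_forall hC)) (measure_ne_top _ _)
end

section
/- Let z ≥ 0, 0 < h ≤ 1, x = (x₁, x₂) ∈ ℝ², and let f : ℝ² → ℝ be four times continuously differentiable on a neighborhood of the rectangle [x₁, x₁+2h] × [x₂−h, x₂+h], with all partial derivatives of order 3 and 4 bounded in absolute value by M there, and with Δ f = 0 there (f harmonic). Set φ̄ = f(x) − z ∂₁ f(x) (the Robin boundary value with normal derivative −∂₁ f). Then the local consistency bound |(h + z) f(x) − z R_h f(x) − h φ̄| ≤ 2 z M h³ holds; i.e. the partially reflecting replacement step has local bias of order h³. -/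
open Real

/-- The five-point discrete Laplacian
`Δ^h f(y) = h⁻²(f(y+he₁) + f(y−he₁) + f(y+he₂) + f(y−he₂) − 4 f(y))`. -/
noncomputable def lapFD (h : ℝ) (f : ℝ × ℝ → ℝ) (y : ℝ × ℝ) : ℝ :=
  (f (y.1 + h, y.2) + f (y.1 - h, y.2) + f (y.1, y.2 + h) + f (y.1, y.2 - h) - 4 * f y) / h ^ 2

/-- The one-sided normal difference
`∇^h f(x) = −(2h)⁻¹ (4 f(x+he₁) − 3 f(x) − f(x+2he₁))`. -/
noncomputable def gradFD (h : ℝ) (f : ℝ × ℝ → ℝ) (x : ℝ × ℝ) : ℝ :=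
  -(4 * f (x.1 + h, x.2) - 3 * f x - f (x.1 + 2 * h, x.2)) / (2 * h)

/-- The reflection average `R_h f(x) = (f(x+h(e₁+e₂)) + f(x+h(e₁−e₂)))/2`. -/
noncomputable def reflFD (h : ℝ) (f : ℝ × ℝ → ℝ) (x : ℝ × ℝ) : ℝ :=
  (f (x.1 + h, x.2 + h) + f (x.1 + h, x.2 - h)) / 2

/-!
Expand `f` to second order along the two diagonal steps `h(e₁ ± e₂)`. On averaging, the `e₂`-parts
of the first-order terms cancel, and by the parallelogram law the second-order terms add up to a
multiple of `Δ f(x) = 0`; hence `R_h f(x) = f(x) + h ∂₁ f(x)` up to the cubic remainders. A third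
derivative in a diagonal direction is a signed sum of eight partial derivatives, so each remainder
is at most `8 M h³ / 6`.
-/

open Set
open scoped Nat

theorem norm_multilinearMap_sum_smul_le {𝕜 E F ι κ : Type*} [NormedField 𝕜] [AddCommMonoid E]
    [Module 𝕜 E] [SeminormedAddCommGroup F] [NormedSpace 𝕜 F] [Fintype ι] [Fintype κ]
    (T : MultilinearMap 𝕜 (fun _ : ι ↦ E) F) (c : κ → 𝕜) (e : κ → E) {M : ℝ}
    (hM : ∀ r : ι → κ, ‖T (e ∘ r)‖ ≤ M) :
    ‖T fun _ ↦ ∑ j, c j • e j‖ ≤ (∑ j, ‖c j‖) ^ Fintype.card ι * M := by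
  classical
  calc
    ‖T fun _ ↦ ∑ j, c j • e j‖ = ‖∑ r : ι → κ, (∏ i, c (r i)) • T (e ∘ r)‖ := by
      rw [T.map_sum]
      simp only [T.map_smul_univ, Function.comp_def]
    _ ≤ ∑ r : ι → κ, (∏ i, ‖c (r i)‖) * M := by
      refine norm_sum_le_of_le _ fun r _ ↦ ?_
      rw [norm_smul, norm_prod]
      gcongr
      exact hM r
    _ = (∑ j, ‖c j‖) ^ Fintype.card ι * M := by
      rw [← Finset.sum_mul, ← Fintype.prod_sum fun _ : ι ↦ fun j ↦ ‖c j‖, Finset.prod_const,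
        Finset.card_univ]

theorem iteratedFDeriv_two_parallelogram {𝕜 E F : Type*} [NontriviallyNormedField 𝕜]
    [NormedAddCommGroup E] [NormedSpace 𝕜 E] [NormedAddCommGroup F] [NormedSpace 𝕜 F]
    (f : E → F) (x a b : E) (h : 𝕜) :
    (iteratedFDeriv 𝕜 2 f x fun _ ↦ h • (a + b)) + (iteratedFDeriv 𝕜 2 f x fun _ ↦ h • (a - b)) =
      (2 * h ^ 2) • (iteratedFDeriv 𝕜 2 f x ![a, a] + iteratedFDeriv 𝕜 2 f x ![b, b]) := by
  simp only [iteratedFDeriv_two_apply, map_add, map_sub, map_smul, add_apply, sub_apply, smul_apply,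
    Matrix.cons_val_zero, Matrix.cons_val_one]
  module

section Taylor

variable {E F κ : Type*} [NormedAddCommGroup E] [NormedSpace ℝ E]
  [NormedAddCommGroup F] [NormedSpace ℝ F] [CompleteSpace F]

theorem norm_map_add_sub_sum_iteratedFDeriv_le {f : E → F} {x y : E} {n : ℕ}
    {C : ℝ} (hf : ∀ p ∈ segment ℝ x (x + y), ContDiffAt ℝ (n + 1) f p)
    (hC : ∀ p ∈ segment ℝ x (x + y), ‖iteratedFDeriv ℝ (n + 1) f p fun _ ↦ y‖ ≤ C) :
    ‖f (x + y) - ∑ k ∈ Finset.range (n + 1), (k ! : ℝ)⁻¹ • iteratedFDeriv ℝ k f x fun _ ↦ y‖ ≤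
      C / (n + 1)! := by
  have mem_segment (t : ℝ) (ht : t ∈ Icc (0 : ℝ) 1) : x + t • y ∈ segment ℝ x (x + y) := by
    rw [segment_eq_image']
    exact ⟨t, ht, by simp⟩
  have integral_weight : ∫ t in (0 : ℝ)..1, (1 - t) ^ n * C = C / (n + 1) := by
    rw [intervalIntegral.integral_mul_const,
      intervalIntegral.integral_comp_sub_left (fun t ↦ t ^ n) 1]
    simp [div_eq_inv_mul]
  have remainder_le : ‖∫ t in (0 : ℝ)..1,
      (1 - t) ^ n • iteratedFDeriv ℝ (n + 1) f (x + t • y) fun _ ↦ y‖ ≤ C / (n + 1) := by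
    rw [← integral_weight]
    refine intervalIntegral.norm_integral_le_of_norm_le zero_le_one (.of_forall fun t ht ↦ ?_)
      (Continuous.intervalIntegrable (by fun_prop) _ _)
    have one_sub_nonneg : 0 ≤ 1 - t := sub_nonneg.2 ht.2
    rw [norm_smul, Real.norm_of_nonneg (by positivity)]
    gcongr
    exact hC _ (mem_segment t (Ioc_subset_Icc_self ht))
  rw [map_add_eq_sum_add_integral_iteratedFDeriv fun t ht ↦ hf _ (mem_segment t ht),
    add_sub_cancel_left, norm_smul, Real.norm_of_nonneg (by positivity)]
  calc
    (n ! : ℝ)⁻¹ * _ ≤ (n ! : ℝ)⁻¹ * (C / (n + 1)) := by gcongr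
    _ = C / (n + 1)! := by
      rw [Nat.factorial_succ]
      push_cast
      field_simp

theorem norm_map_add_sum_smul_sub_sum_iteratedFDeriv_le [Fintype κ] {f : E → F}
    {x : E} {n : ℕ} {M : ℝ} (c : κ → ℝ) (e : κ → E)
    (hf : ∀ p ∈ segment ℝ x (x + ∑ j, c j • e j), ContDiffAt ℝ (n + 1) f p)
    (hM : ∀ p ∈ segment ℝ x (x + ∑ j, c j • e j), ∀ r : Fin (n + 1) → κ,
      ‖iteratedFDeriv ℝ (n + 1) f p (e ∘ r)‖ ≤ M) :
    ‖f (x + ∑ j, c j • e j) -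
        ∑ k ∈ Finset.range (n + 1), (k ! : ℝ)⁻¹ • iteratedFDeriv ℝ k f x fun _ ↦ ∑ j, c j • e j‖ ≤
      (∑ j, ‖c j‖) ^ (n + 1) * M / (n + 1)! :=
  norm_map_add_sub_sum_iteratedFDeriv_le hf fun p hp ↦ by
    simpa only [ContinuousMultilinearMap.coe_coe, Fintype.card_fin] using
      norm_multilinearMap_sum_smul_le (iteratedFDeriv ℝ (n + 1) f p).toMultilinearMap c e (hM p hp)

end Taylor

section Reflection

variable {E F : Type*} [NormedAddCommGroup E] [NormedSpace ℝ E]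
  [NormedAddCommGroup F] [NormedSpace ℝ F] [CompleteSpace F] {f : E → F} {x a b : E} {r s h M : ℝ}

theorem norm_map_add_sub_quadratic_le
    (hf : ∀ p ∈ segment ℝ x (x + (r • a + s • b)), ContDiffAt ℝ 3 f p)
    (hM : ∀ p ∈ segment ℝ x (x + (r • a + s • b)), ∀ v : Fin 3 → E, (∀ i, v i = a ∨ v i = b) →
      ‖iteratedFDeriv ℝ 3 f p v‖ ≤ M) :
    ‖f (x + (r • a + s • b)) - (f x + fderiv ℝ f x (r • a + s • b) +
        (2 : ℝ)⁻¹ • iteratedFDeriv ℝ 2 f x fun _ ↦ r • a + s • b)‖ ≤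
      (|r| + |s|) ^ 3 * M / 6 := by
  have sum_eq : ∑ j, ![r, s] j • ![a, b] j = r • a + s • b := by simp
  have choice (i : Fin 2) : ![a, b] i = a ∨ ![a, b] i = b := by fin_cases i <;> simp
  have taylor := norm_map_add_sum_smul_sub_sum_iteratedFDeriv_le (n := 2) (f := f) (x := x) (M := M)
    ![r, s] ![a, b] (by rw [sum_eq]; exact_mod_cast hf)
    (by rw [sum_eq]; exact fun p hp k ↦ hM p hp _ fun i ↦ choice (k i))
  simpa [Finset.sum_range_succ, Nat.factorial] using taylor

theorem norm_reflection_average_sub_le {S : Set E} (hS : Convex ℝ S)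
    (hx : x ∈ S) (hadd : x + h • (a + b) ∈ S) (hsub : x + h • (a - b) ∈ S)
    (hf : ∀ p ∈ S, ContDiffAt ℝ 3 f p)
    (hM : ∀ p ∈ S, ∀ v : Fin 3 → E, (∀ i, v i = a ∨ v i = b) → ‖iteratedFDeriv ℝ 3 f p v‖ ≤ M)
    (hharm : iteratedFDeriv ℝ 2 f x ![a, a] + iteratedFDeriv ℝ 2 f x ![b, b] = 0) :
    ‖(2 : ℝ)⁻¹ • (f (x + h • (a + b)) + f (x + h • (a - b))) - (f x + h • fderiv ℝ f x a)‖ ≤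
      4 / 3 * M * |h| ^ 3 := by
  have taylor_bound (w : E) (s : ℝ) (hs : |s| = |h|) (hw : h • a + s • b = w) (hmem : x + w ∈ S) :
      ‖f (x + w) - (f x + fderiv ℝ f x w + (2 : ℝ)⁻¹ • iteratedFDeriv ℝ 2 f x fun _ ↦ w)‖ ≤
        4 / 3 * M * |h| ^ 3 := by
    have segment_subset : segment ℝ x (x + w) ⊆ S := hS.segment_subset hx hmem
    subst hw
    calc
      _ ≤ (|h| + |s|) ^ 3 * M / 6 :=
        norm_map_add_sub_quadratic_le (fun p hp ↦ hf p (segment_subset hp))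
          fun p hp ↦ hM p (segment_subset hp)
      _ = 4 / 3 * M * |h| ^ 3 := by rw [hs]; ring
  have add_bound := taylor_bound (h • (a + b)) h rfl (by module) hadd
  have sub_bound := taylor_bound (h • (a - b)) (-h) (abs_neg h) (by module) hsub
  have first_order : fderiv ℝ f x (h • (a + b)) + fderiv ℝ f x (h • (a - b)) =
      (2 * h) • fderiv ℝ f x a := by
    simp only [map_add, map_sub, map_smul]
    module
  have second_order := iteratedFDeriv_two_parallelogram f x a b h
  rw [hharm, smul_zero] at second_order
  set addError := f (x + h • (a + b)) - _
  set subError := f (x + h • (a - b)) - _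
  calc
    _ = ‖(2 : ℝ)⁻¹ • (addError + subError)‖ := by
      congr 1
      linear_combination (norm := module) (2 : ℝ)⁻¹ • first_order + (4 : ℝ)⁻¹ • second_order
    _ ≤ 2⁻¹ * (‖addError‖ + ‖subError‖) := by
      rw [norm_smul, Real.norm_of_nonneg (by positivity)]
      gcongr
      exact norm_add_le _ _
    _ ≤ 4 / 3 * M * |h| ^ 3 := by linarith

end Reflection

theorem add_smul_diagonal (x : ℝ × ℝ) (h : ℝ) :
    x + h • ((1, 0) + (0, 1)) = (x.1 + h, x.2 + h) := by
  ext <;> simp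

theorem add_smul_antidiagonal (x : ℝ × ℝ) (h : ℝ) :
    x + h • ((1, 0) - (0, 1)) = (x.1 + h, x.2 - h) := by
  ext <;> simp [sub_eq_add_neg]

theorem reflFD_eq_smul_add (h : ℝ) (f : ℝ × ℝ → ℝ) (x : ℝ × ℝ) :
    reflFD h f x =
      (2 : ℝ)⁻¹ • (f (x + h • ((1, 0) + (0, 1))) + f (x + h • ((1, 0) - (0, 1)))) := by
  rw [add_smul_diagonal, add_smul_antidiagonal, reflFD, smul_eq_mul, div_eq_inv_mul]

theorem abs_reflFD_sub_le {h : ℝ} (hh0 : 0 ≤ h) {x : ℝ × ℝ} {M : ℝ} {f : ℝ × ℝ → ℝ}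
    (hf : ∀ p ∈ Icc x.1 (x.1 + h) ×ˢ Icc (x.2 - h) (x.2 + h), ContDiffAt ℝ 3 f p)
    (hM : ∀ p ∈ Icc x.1 (x.1 + h) ×ˢ Icc (x.2 - h) (x.2 + h), ∀ v : Fin 3 → ℝ × ℝ,
      (∀ i, v i = (1, 0) ∨ v i = (0, 1)) → |iteratedFDeriv ℝ 3 f p v| ≤ M)
    (hharm : iteratedFDeriv ℝ 2 f x ![(1, 0), (1, 0)]
      + iteratedFDeriv ℝ 2 f x ![(0, 1), (0, 1)] = 0) :
    |reflFD h f x - (f x + h * fderiv ℝ f x (1, 0))| ≤ 4 / 3 * M * h ^ 3 := by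
  have average := norm_reflection_average_sub_le (h := h)
    ((convex_Icc x.1 (x.1 + h)).prod (convex_Icc (x.2 - h) (x.2 + h)))
    ⟨⟨le_rfl, by linarith⟩, by linarith, by linarith⟩
    (by simp [Prod.le_def, hh0, add_assoc])
    (by simp [Prod.le_def, hh0]) hf hM hharm
  rwa [← reflFD_eq_smul_add, Real.norm_eq_abs, smul_eq_mul, abs_of_nonneg hh0] at average

theorem stmt12_general (z : ℝ) {h : ℝ} (hh0 : 0 ≤ h) {x : ℝ × ℝ} {M : ℝ} {f : ℝ × ℝ → ℝ}
    {U : Set (ℝ × ℝ)} (hU : IsOpen U)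
    (hrect : Icc x.1 (x.1 + h) ×ˢ Icc (x.2 - h) (x.2 + h) ⊆ U)
    (hf : ContDiffOn ℝ 3 f U)
    (hM3 : ∀ p ∈ Icc x.1 (x.1 + h) ×ˢ Icc (x.2 - h) (x.2 + h), ∀ v : Fin 3 → ℝ × ℝ,
      (∀ i, v i = (1, 0) ∨ v i = (0, 1)) → |iteratedFDerivWithin ℝ 3 f U p v| ≤ M)
    (hharm : iteratedFDerivWithin ℝ 2 f U x ![(1, 0), (1, 0)]
      + iteratedFDerivWithin ℝ 2 f U x ![(0, 1), (0, 1)] = 0) :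
    |(h + z) * f x - z * reflFD h f x - h * (f x - z * fderivWithin ℝ f U x (1, 0))| ≤
      4 / 3 * |z| * M * h ^ 3 := by
  have hxU : x ∈ U := hrect ⟨⟨le_rfl, by linarith⟩, by linarith, by linarith⟩
  have average : |reflFD h f x - (f x + h * fderiv ℝ f x (1, 0))| ≤ 4 / 3 * M * h ^ 3 := by
    refine abs_reflFD_sub_le hh0 (fun p hp ↦ hf.contDiffAt (hU.mem_nhds (hrect hp)))
      (fun p hp ↦ ?_) ?_
    · rw [← iteratedFDerivWithin_of_isOpen 3 hU (hrect hp)]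
      exact hM3 p hp
    · rwa [← iteratedFDerivWithin_of_isOpen 2 hU hxU]
  calc
    _ = |-z * (reflFD h f x - (f x + h * fderiv ℝ f x (1, 0)))| := by
      rw [fderivWithin_of_isOpen hU hxU]
      ring_nf
    _ ≤ |z| * (4 / 3 * M * h ^ 3) := by
      rw [abs_mul, abs_neg]
      gcongr
    _ = 4 / 3 * |z| * M * h ^ 3 := by ring

/-- Let `z ≥ 0`, `0 < h ≤ 1`, `x = (x₁,x₂) ∈ ℝ²`, and let `f` be `C⁴` on a neighborhood of
`[x₁, x₁+2h] × [x₂−h, x₂+h]`, with all partial derivatives of order 3 and 4 bounded in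
absolute value by `M` there and `Δ f = 0` there.  With `φ̄ = f(x) − z ∂₁ f(x)` (the Robin
boundary value) the local consistency bound
`|(h + z) f(x) − z R_h f(x) − h φ̄| ≤ 2 z M h³` holds. -/
theorem stmt12 (z : ℝ) (hz : 0 ≤ z) (h : ℝ) (hh0 : 0 < h) (hh1 : h ≤ 1)
    (x : ℝ × ℝ) (M : ℝ) (f : ℝ × ℝ → ℝ)
    (U : Set (ℝ × ℝ)) (hU : IsOpen U)
    (hrect : Set.Icc x.1 (x.1 + 2 * h) ×ˢ Set.Icc (x.2 - h) (x.2 + h) ⊆ U)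
    (hf : ContDiffOn ℝ 4 f U)
    (hM3 : ∀ p ∈ Set.Icc x.1 (x.1 + 2 * h) ×ˢ Set.Icc (x.2 - h) (x.2 + h),
      ∀ v : Fin 3 → ℝ × ℝ,
      (∀ i, v i = ((1 : ℝ), (0 : ℝ)) ∨ v i = ((0 : ℝ), (1 : ℝ))) →
      |iteratedFDerivWithin ℝ 3 f U p v| ≤ M)
    (hM4 : ∀ p ∈ Set.Icc x.1 (x.1 + 2 * h) ×ˢ Set.Icc (x.2 - h) (x.2 + h),
      ∀ v : Fin 4 → ℝ × ℝ,
      (∀ i, v i = ((1 : ℝ), (0 : ℝ)) ∨ v i = ((0 : ℝ), (1 : ℝ))) →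
      |iteratedFDerivWithin ℝ 4 f U p v| ≤ M)
    (hharm : ∀ p ∈ Set.Icc x.1 (x.1 + 2 * h) ×ˢ Set.Icc (x.2 - h) (x.2 + h),
      iteratedFDerivWithin ℝ 2 f U p ![(1, 0), (1, 0)]
        + iteratedFDerivWithin ℝ 2 f U p ![(0, 1), (0, 1)] = 0) :
    |(h + z) * f x - z * reflFD h f x
        - h * (f x - z * fderivWithin ℝ f U x (1, 0))| ≤ 2 * z * M * h ^ 3 := by
  have hsub : Icc x.1 (x.1 + h) ×ˢ Icc (x.2 - h) (x.2 + h) ⊆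
      Icc x.1 (x.1 + 2 * h) ×ˢ Icc (x.2 - h) (x.2 + h) := by gcongr; linarith
  have bias := stmt12_general z hh0.le hU (hsub.trans hrect) (hf.of_le (by norm_num))
    (fun p hp ↦ hM3 p (hsub hp)) (hharm x ⟨⟨le_rfl, by linarith⟩, by linarith, by linarith⟩)
  rw [abs_of_nonneg hz] at bias
  linarith [(abs_nonneg _).trans bias]
end

section
/- Fix R > 0 and 0 ≤ r < R, set c = (R − r)/(R + r) and f(u) = 2 arctan(c · tan(π u)) for u ∈ (−1/2, 1/2). Then f is differentiable on (−1/2, 1/2) and its derivative satisfies f'(u) = 2π (R² − 2 R r cos(f(u)) + r²)/(R² − r²) for every u ∈ (−1/2, 1/2); equivalently, f'(u) · P(f(u)) = 1 where P(α) = (R² − r²)/(2π (R² − 2 R r cos α + r²)) is the Poisson kernel of the disk of radius R evaluated at radius r. -/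
open Real

/-!
With `α = 2φ`, the squared distance from the starting point to the exit point is
`R² - 2Rr cos α + r² = (R - r)² cos² φ + (R + r)² sin² φ`. The substitution
`tan φ = (R - r) / (R + r) * t` turns the second term into `(R - r)² t² cos² φ`, so the distance
squared is `(R - r)² (1 + t²) cos² φ`. For `t = tan (π u)`, the factor `(1 + t²) cos² φ` is also
what the chain rule produces in the derivative of `2φ` with respect to `u`.
-/

/-- The map `f` of the uncentered walk on spheres: it sends a uniform sample `u` of `(-1/2, 1/2)` to
the exit angle from the disk of radius `R` of planar Brownian motion started at distance `r` from
the center. Angles are measured at the center, from the direction of the starting point. -/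
noncomputable def exitAngle (R r u : ℝ) : ℝ :=
  2 * arctan ((R - r) / (R + r) * tan (π * u))

/-- The Poisson kernel `P(α)` of the disk of radius `R` at a point at distance `r` from the center,
normalized as a probability density in the angle `α`. Mathlib's `poissonKernel` is instead the
density with respect to the uniform probability measure on the circle, hence `2π` times as large. -/
noncomputable def poissonDensity (R r α : ℝ) : ℝ :=
  (R ^ 2 - r ^ 2) / (2 * π * (R ^ 2 - 2 * R * r * cos α + r ^ 2))

theorem hasDerivAt_two_mul_arctan_mul_tan (c : ℝ) {x : ℝ} (hx : cos x ≠ 0) :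
    HasDerivAt (fun y => 2 * arctan (c * tan y))
      (2 * c * (1 + tan x ^ 2) / (1 + (c * tan x) ^ 2)) x := by
  have hsec : 1 / cos x ^ 2 = 1 + tan x ^ 2 := by
    rw [← inv_one_add_tan_sq hx, one_div, inv_inv]
  have htan : HasDerivAt tan (1 + tan x ^ 2) x := hsec ▸ hasDerivAt_tan hx
  exact ((htan.const_mul c).arctan.const_mul 2).congr_deriv (by ring)

theorem sq_sub_mul_cos_two_mul_add_sq (R r φ : ℝ) :
    R ^ 2 - 2 * R * r * cos (2 * φ) + r ^ 2 =
      (R - r) ^ 2 * cos φ ^ 2 + (R + r) ^ 2 * sin φ ^ 2 := by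
  rw [cos_two_mul, sin_sq]
  ring

theorem add_ne_zero_and_sub_ne_zero_of_sq_ne_sq {A : Type*} [CommRing A] {a b : A}
    (h : a ^ 2 ≠ b ^ 2) : a + b ≠ 0 ∧ a - b ≠ 0 := by
  have hmul : (a + b) * (a - b) ≠ 0 := by rwa [← sq_sub_sq, sub_ne_zero]
  exact ⟨left_ne_zero_of_mul hmul, right_ne_zero_of_mul hmul⟩

theorem sq_sub_mul_cos_add_sq_pos {R r : ℝ} (h : R ^ 2 ≠ r ^ 2) (α : ℝ) :
    0 < R ^ 2 - 2 * R * r * cos α + r ^ 2 := by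
  obtain ⟨hadd, hsub⟩ := add_ne_zero_and_sub_ne_zero_of_sq_ne_sq h
  have hhalf : α = 2 * (α / 2) := by ring
  rw [hhalf, sq_sub_mul_cos_two_mul_add_sq]
  rcases eq_or_ne (cos (α / 2)) 0 with hcos | hcos
  · have hsin : sin (α / 2) ^ 2 = 1 := by rw [sin_sq, hcos]; ring
    rw [hsin]
    positivity
  · positivity

theorem poissonDensity_ne_zero {R r : ℝ} (h : R ^ 2 ≠ r ^ 2) (α : ℝ) :
    poissonDensity R r α ≠ 0 :=
  div_ne_zero (sub_ne_zero.mpr h)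
    (mul_pos two_pi_pos (sq_sub_mul_cos_add_sq_pos h α)).ne'

theorem sq_sub_mul_cos_two_mul_arctan_add_sq (R r x : ℝ) :
    R ^ 2 - 2 * R * r * cos (2 * arctan x) + r ^ 2 =
      ((R - r) ^ 2 + ((R + r) * x) ^ 2) / (1 + x ^ 2) := by
  rw [sq_sub_mul_cos_two_mul_add_sq, cos_sq_arctan, sin_sq, cos_sq_arctan]
  field_simp
  ring

theorem sq_sub_mul_cos_exitAngle_add_sq {R r : ℝ} (h : R + r ≠ 0) (u : ℝ) :
    R ^ 2 - 2 * R * r * cos (exitAngle R r u) + r ^ 2 =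
      (R - r) ^ 2 * (1 + tan (π * u) ^ 2) / (1 + ((R - r) / (R + r) * tan (π * u)) ^ 2) := by
  have hscale : (R + r) * ((R - r) / (R + r) * tan (π * u)) = (R - r) * tan (π * u) := by
    rw [← mul_assoc, mul_div_cancel₀ _ h]
  rw [exitAngle, sq_sub_mul_cos_two_mul_arctan_add_sq, hscale]
  ring

theorem hasDerivAt_exitAngle {R r u : ℝ} (h : R ^ 2 ≠ r ^ 2) (hu : cos (π * u) ≠ 0) :
    HasDerivAt (exitAngle R r) (poissonDensity R r (exitAngle R r u))⁻¹ u := by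
  obtain ⟨hadd, hsub⟩ := add_ne_zero_and_sub_ne_zero_of_sq_ne_sq h
  have hchain := (hasDerivAt_two_mul_arctan_mul_tan ((R - r) / (R + r)) hu).comp u
    (hasDerivAt_const_mul π)
  refine hchain.congr_deriv ?_
  rw [poissonDensity, inv_div, sq_sub_mul_cos_exitAngle_add_sq hadd, sq_sub_sq]
  generalize 1 + ((R - r) / (R + r) * tan (π * u)) ^ 2 = D
  field_simp

theorem cos_pi_mul_pos_of_mem_Ioo {u : ℝ} (hu : u ∈ Set.Ioo (-(1 / 2) : ℝ) (1 / 2)) :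
    0 < cos (π * u) :=
  cos_pos_of_mem_Ioo ⟨by nlinarith [hu.1, pi_pos], by nlinarith [hu.2, pi_pos]⟩

theorem stmt15_general {R r u : ℝ} (h : R ^ 2 ≠ r ^ 2) (hu : cos (π * u) ≠ 0) :
    HasDerivAt (exitAngle R r)
        (2 * π * (R ^ 2 - 2 * R * r * cos (exitAngle R r u) + r ^ 2) / (R ^ 2 - r ^ 2)) u
      ∧ deriv (exitAngle R r) u * poissonDensity R r (exitAngle R r u) = 1 := by
  have hderiv := hasDerivAt_exitAngle h hu
  refine ⟨hderiv.congr_deriv (inv_div _ _), ?_⟩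
  rw [hderiv.deriv, inv_mul_cancel₀ (poissonDensity_ne_zero h _)]

/-- Fix `R > 0`, `0 ≤ r < R`, set `c = (R−r)/(R+r)` and `f(u) = 2 arctan(c tan(π u))` for
`u ∈ (−1/2, 1/2)`.  Then `f` is differentiable on `(−1/2, 1/2)` with
`f'(u) = 2π (R² − 2Rr cos(f(u)) + r²)/(R² − r²)`; equivalently `f'(u) · P(f(u)) = 1`, where
`P(α) = (R² − r²)/(2π (R² − 2Rr cos α + r²))` is the Poisson kernel of the disk of radius
`R` at radius `r`. -/
theorem stmt15 (R r : ℝ) (hR : 0 < R) (hr : 0 ≤ r) (hrR : r < R) :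
    ∀ u ∈ Set.Ioo (-(1 / 2) : ℝ) (1 / 2),
      HasDerivAt (fun u : ℝ => 2 * arctan ((R - r) / (R + r) * tan (π * u)))
        (2 * π * (R ^ 2 - 2 * R * r *
            cos (2 * arctan ((R - r) / (R + r) * tan (π * u))) + r ^ 2) / (R ^ 2 - r ^ 2)) u
      ∧ deriv (fun u : ℝ => 2 * arctan ((R - r) / (R + r) * tan (π * u))) u
          * ((R ^ 2 - r ^ 2) / (2 * π * (R ^ 2 - 2 * R * r *
              cos (2 * arctan ((R - r) / (R + r) * tan (π * u))) + r ^ 2))) = 1 :=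
  fun _ hu => stmt15_general (pow_lt_pow_left₀ hrR hr two_ne_zero).ne'
    (cos_pi_mul_pos_of_mem_Ioo hu).ne'
end
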